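/- arXiv:1507.04903 — 3 statements merged into one kernel-verified Lean document; each statement's English description precedes it below -/
import Mathlib

section
/- Let a < b be real numbers and let S be a partition of the closed interval [a,b] into closed segments (pairwise disjoint sets of the form [c,d], c ≤ d, whose union is [a,b]) such that S has more than one member. Then S contains uncountably many singleton members, i.e., the set { s ∈ S : s = {x} for some x } is uncountable. -/
/-!
Choosing a point in each member of `S` turns the partition into a monotone function `f` whose
fibres are the members. As these are closed and their union is connected, the range of `f` is
densely ordered, so `f` is continuous onto its range with the order topology. If `S` is countable,
this range is a countable connected completely regular space, hence a point, and `S` has only one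
member. Finally, a separable dense order has room for only countably many disjoint
nondegenerate intervals, so the members that make `S` uncountable are singletons.
-/

open Set TopologicalSpace

theorem subsingleton_of_preconnectedSpace_of_countable {X : Type*} [TopologicalSpace X]
    [T35Space X] [PreconnectedSpace X] [Countable X] : Subsingleton X := by
  refine ⟨fun x y ↦ by_contra fun hxy ↦ ?_⟩
  obtain ⟨u, hu, hux, huy⟩ :=
    CompletelyRegularSpace.completely_regular x {y} isClosed_singleton hxy
  have hsub : (range u).Subsingleton :=
    (countable_range u).isTotallyDisconnected _ Subset.rfl (isPreconnected_range hu)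
  have huxy : u x = u y := hsub (mem_range_self x) (mem_range_self y)
  exact zero_ne_one (hux.symm.trans (huxy.trans (huy rfl)))

theorem preimage_Iic_eq_of_monotone {X Y : Type*} [LinearOrder X] [PartialOrder Y] {f : X → Y}
    (hf : Monotone f) (x : X) : f ⁻¹' Iic (f x) = Iic x ∪ f ⁻¹' {f x} := by
  ext z
  refine ⟨fun hz ↦ (le_total z x).imp id fun hxz ↦ le_antisymm hz (hf hxz), ?_⟩
  rintro (hzx | hz)
  exacts [hf hzx, le_of_eq hz]

theorem preimage_Ici_eq_of_monotone {X Y : Type*} [LinearOrder X] [PartialOrder Y] {f : X → Y}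
    (hf : Monotone f) (x : X) : f ⁻¹' Ici (f x) = Ici x ∪ f ⁻¹' {f x} :=
  preimage_Iic_eq_of_monotone hf.dual x

section Monotone

variable {X Y : Type*} [LinearOrder X] [TopologicalSpace X] [OrderTopology X]
  [PreconnectedSpace X] [LinearOrder Y] {f : X → Y}

theorem subsingleton_of_monotone_surjective_of_countable [DenselyOrdered Y] [Countable Y]
    (hf : Monotone f) (hsurj : Function.Surjective f) : Subsingleton Y := by
  let : TopologicalSpace Y := Preorder.topology Y
  have : OrderTopology Y := ⟨rfl⟩
  have : PreconnectedSpace Y :=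
    hsurj.denseRange.preconnectedSpace (hf.continuous_of_surjective hsurj)
  exact subsingleton_of_preconnectedSpace_of_countable

theorem denselyOrdered_range_of_monotone_of_isClosed_fibers (hf : Monotone f)
    (hclosed : ∀ x, IsClosed (f ⁻¹' {f x})) : DenselyOrdered (range f) := by
  refine ⟨?_⟩
  rintro ⟨_, x, rfl⟩ ⟨_, y, rfl⟩ (hxy : f x < f y)
  by_contra! hgap
  have hlower : IsClosed (f ⁻¹' Iic (f x)) :=
    preimage_Iic_eq_of_monotone hf x ▸ isClosed_Iic.union (hclosed x)
  have hupper : IsClosed (f ⁻¹' Ici (f y)) :=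
    preimage_Ici_eq_of_monotone hf y ▸ isClosed_Ici.union (hclosed y)
  have hcover : univ ⊆ f ⁻¹' Iic (f x) ∪ f ⁻¹' Ici (f y) := fun z _ ↦
    (le_or_gt (f z) (f x)).imp id fun hxz ↦ hgap ⟨f z, z, rfl⟩ hxz
  obtain ⟨z, -, hzx, hyz⟩ := isPreconnected_closed_iff.1 isPreconnected_univ _ _ hlower hupper
    hcover ⟨x, mem_univ x, self_mem_Iic⟩ ⟨y, mem_univ y, self_mem_Ici⟩
  exact (hxy.trans_le (hyz.trans hzx)).false

theorem subsingleton_range_of_monotone_of_isClosed_fibers (hf : Monotone f)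
    (hclosed : ∀ x, IsClosed (f ⁻¹' {f x})) (hcount : (range f).Countable) :
    (range f).Subsingleton := by
  have := denselyOrdered_range_of_monotone_of_isClosed_fibers hf hclosed
  have := hcount.to_subtype
  exact subsingleton_coe _ |>.1 <|
    subsingleton_of_monotone_surjective_of_countable (f := rangeFactorization f) hf
      rangeFactorization_surjective

end Monotone

section Partition

variable {α : Type*} [LinearOrder α] {S : Set (Set α)}

theorem lt_of_lt_of_disjoint_of_ordConnected {s t : Set α} (hs : s.OrdConnected)
    (ht : t.OrdConnected) (hst : Disjoint s t) {x x' y y' : α} (hx : x ∈ s) (hx' : x' ∈ s)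
    (hy : y ∈ t) (hy' : y' ∈ t) (hxy : x < y) : x' < y' := by
  have hx'y : x' < y := by
    by_contra! hyx'
    exact disjoint_left.1 hst (hs.out hx hx' ⟨hxy.le, hyx'⟩) hy
  by_contra! hy'x'
  exact disjoint_left.1 hst hx' (ht.out hy' hy ⟨hy'x', hx'y.le⟩)

theorem exists_monotone_fibers_eq_of_pairwiseDisjoint (hdisj : S.PairwiseDisjoint id)
    (hne : ∀ s ∈ S, s.Nonempty) (hconv : ∀ s ∈ S, s.OrdConnected) :
    ∃ (f : ⋃₀ S → α) (rep : S → α), Monotone f ∧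
      ∀ s : S, f ⁻¹' {rep s} = Subtype.val ⁻¹' (s : Set α) := by
  have hcover (x : ⋃₀ S) : ∃ s : S, (x : α) ∈ (s : Set α) :=
    let ⟨s, hs, hxs⟩ := x.2
    ⟨⟨s, hs⟩, hxs⟩
  have hunique {s t : S} {x : α} (hxs : x ∈ (s : Set α)) (hxt : x ∈ (t : Set α)) : s = t :=
    Subtype.ext (hdisj.elim_set s.2 t.2 x hxs hxt)
  choose member hmem using hcover
  choose rep hrep using fun s : S ↦ hne s s.2
  refine ⟨fun x ↦ rep (member x), rep, fun x y hxy ↦ ?_, fun s ↦ ?_⟩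
  · rcases eq_or_ne (member x) (member y) with heq | hmember_ne
    · exact (congrArg rep heq).le
    · have hdisj_xy : Disjoint (member x : Set α) (member y) :=
        hdisj (member x).2 (member y).2 (Subtype.coe_ne_coe.2 hmember_ne)
      have hlt : (x : α) < y := lt_of_le_of_ne hxy (hdisj_xy.ne_of_mem (hmem x) (hmem y))
      exact (lt_of_lt_of_disjoint_of_ordConnected (hconv _ (member x).2) (hconv _ (member y).2)
        hdisj_xy (hmem x) (hrep (member x)) (hmem y) (hrep (member y)) hlt).le
  · ext x
    constructor
    · intro (hx : rep (member x) = rep s)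
      have hmember : member x = s := hunique (hrep (member x)) (hx ▸ hrep s)
      exact hmember ▸ hmem x
    · exact fun hxs ↦ congrArg rep (hunique (hmem x) hxs)

variable [TopologicalSpace α] [OrderTopology α]

theorem subsingleton_of_countable_of_isPreconnected_sUnion (hdisj : S.PairwiseDisjoint id)
    (hunion : IsPreconnected (⋃₀ S)) (hne : ∀ s ∈ S, s.Nonempty)
    (hclosed : ∀ s ∈ S, IsClosed s) (hconv : ∀ s ∈ S, s.OrdConnected) (hcount : S.Countable) :
    S.Subsingleton := by
  have := hunion.ordConnected
  have := Subtype.preconnectedSpace hunion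
  have := hcount.to_subtype
  obtain ⟨f, rep, hf, hfib⟩ := exists_monotone_fibers_eq_of_pairwiseDisjoint hdisj hne hconv
  have hmem_iff (s : S) (x : ⋃₀ S) : f x = rep s ↔ (x : α) ∈ (s : Set α) :=
    Set.ext_iff.1 (hfib s) x
  have hf_rep (x : ⋃₀ S) : ∃ s, f x = rep s :=
    let ⟨s, hs, hxs⟩ := x.2
    ⟨⟨s, hs⟩, (hmem_iff _ x).2 hxs⟩
  have hfib_closed (x : ⋃₀ S) : IsClosed (f ⁻¹' {f x}) := by
    obtain ⟨s, hxs⟩ := hf_rep x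
    rw [hxs, hfib]
    exact (hclosed s s.2).preimage continuous_subtype_val
  have hrange : (range f).Countable := (countable_range rep).mono <| by
    rintro _ ⟨x, rfl⟩
    exact (hf_rep x).imp fun _ ↦ Eq.symm
  have hconst : (range f).Subsingleton :=
    subsingleton_range_of_monotone_of_isClosed_fibers hf hfib_closed hrange
  intro s hs t ht
  obtain ⟨x, hx⟩ := hne s hs
  obtain ⟨y, hy⟩ := hne t ht
  have hfxy : f ⟨y, t, ht, hy⟩ = f ⟨x, s, hs, hx⟩ := hconst (mem_range_self _) (mem_range_self _)
  have hys : y ∈ s := (hmem_iff ⟨s, hs⟩ _).1 (hfxy.trans ((hmem_iff ⟨s, hs⟩ _).2 hx))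
  exact hdisj.elim_set hs ht y hys hy

variable [DenselyOrdered α]

theorem interior_nonempty_of_ordConnected_of_nontrivial {s : Set α} (hs : s.OrdConnected)
    (hnontriv : s.Nontrivial) : (interior s).Nonempty := by
  obtain ⟨x, hx, y, hy, hxy⟩ := hnontriv.exists_lt
  exact (nonempty_Ioo.2 hxy).mono
    (interior_maximal (Ioo_subset_Icc_self.trans (hs.out hx hy)) isOpen_Ioo)

variable [SeparableSpace α]

theorem countable_setOf_nontrivial_of_pairwiseDisjoint (hdisj : S.PairwiseDisjoint id)
    (hconv : ∀ s ∈ S, s.OrdConnected) : {s ∈ S | s.Nontrivial}.Countable :=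
  (hdisj.subset (sep_subset S _)).countable_of_nonempty_interior fun s hs ↦
    interior_nonempty_of_ordConnected_of_nontrivial (hconv s hs.1) hs.2

theorem uncountably_many_singletons_of_partition_Icc_general (hdisj : S.PairwiseDisjoint id)
    (hunion : IsPreconnected (⋃₀ S)) (hne : ∀ s ∈ S, s.Nonempty)
    (hclosed : ∀ s ∈ S, IsClosed s) (hconv : ∀ s ∈ S, s.OrdConnected)
    (hnontriv : S.Nontrivial) : ¬ {s ∈ S | ∃ x, s = {x}}.Countable := by
  intro hsingle
  have hcount : S.Countable :=
    (hsingle.union (countable_setOf_nontrivial_of_pairwiseDisjoint hdisj hconv)).mono fun s hs ↦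
      (hne s hs).exists_eq_singleton_or_nontrivial.imp (⟨hs, ·⟩) (⟨hs, ·⟩)
  exact hnontriv.not_subsingleton <|
    subsingleton_of_countable_of_isPreconnected_sUnion hdisj hunion hne hclosed hconv hcount

end Partition

/-- If `S` is a partition of a closed interval `[a,b]` (with `a < b`) into closed
segments `[c,d]` (`c ≤ d`), and `S` has more than one member, then `S` contains
uncountably many singleton members. -/
theorem uncountably_many_singletons_of_partition_Icc (a b : ℝ) (hab : a < b)
    (S : Set (Set ℝ))
    (hdisj : S.Pairwise Disjoint)
    (hcover : ⋃₀ S = Set.Icc a b)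
    (hseg : ∀ s ∈ S, ∃ c d : ℝ, c ≤ d ∧ s = Set.Icc c d)
    (hnontriv : S.Nontrivial) :
    ¬ ({s ∈ S | ∃ x : ℝ, s = {x}}).Countable := by
  have hmem : ∀ s ∈ S, s.Nonempty ∧ IsClosed s ∧ s.OrdConnected := by
    intro s hs
    obtain ⟨c, d, hcd, rfl⟩ := hseg s hs
    exact ⟨nonempty_Icc.2 hcd, isClosed_Icc, ordConnected_Icc⟩
  exact uncountably_many_singletons_of_partition_Icc_general hdisj (hcover ▸ isPreconnected_Icc)
    (fun s hs ↦ (hmem s hs).1) (fun s hs ↦ (hmem s hs).2.1) (fun s hs ↦ (hmem s hs).2.2) hnontriv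
end

section
/- Let D = [0,1] × [0,1] ⊆ ℝ² and let S ⊆ D be downward closed within D (if x ∈ S, y ∈ D and y ≤ x in the product order, then y ∈ S), with both S and D ∖ S nonempty. Then the boundary Γ of S in D (the frontier of S in the subspace topology on D), equipped with the subspace topology, is homeomorphic to a closed real interval: there exist a ≤ b in ℝ and a homeomorphism from Γ onto [a,b] (the case a = b meaning Γ is a single point). -/
/-- The closed unit square `D = [0,1] × [0,1] ⊆ ℝ²`. -/
def unitSquare : Set (ℝ × ℝ) := Set.Icc 0 1 ×ˢ Set.Icc 0 1

/-! Slice the rectangle by the diagonals `x - y = c`. Two frontier points of a lower set are never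
strictly ordered in both coordinates, so each diagonal carries at most one frontier point. If a
diagonal separates two frontier points, its lowest point lies in the set and its highest point does
not, since otherwise one of the two frontier points would be interior to the set or to its
complement; hence the diagonal meets the frontier by connectedness. Thus `x - y` maps the frontier,
which is compact, continuously and bijectively onto a nonempty compact interval. -/

open Set Topology

theorem inter_frontier_nonempty_of_isPreconnected {X : Type*} [TopologicalSpace X] {A T : Set X}
    (hA : IsPreconnected A) (hT : (A ∩ T).Nonempty) (hTc : (A ∩ Tᶜ).Nonempty) :
    (A ∩ frontier T).Nonempty := by
  by_contra hempty
  have hcover : A ⊆ interior T ∪ interior Tᶜ := by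
    rw [← compl_frontier_eq_union_interior, subset_compl_iff_disjoint_right,
      disjoint_iff_inter_eq_empty]
    exact not_nonempty_iff_eq_empty.1 hempty
  have hdisj : Disjoint (interior T) (interior Tᶜ) :=
    disjoint_compl_right.mono interior_subset interior_subset
  obtain ⟨x, hxA, hxT⟩ := hT
  obtain ⟨y, hyA, hyT⟩ := hTc
  rcases hA.subset_or_subset isOpen_interior isOpen_interior hdisj hcover with h | h
  · exact hyT (interior_subset (h hyA))
  · exact interior_subset (h hxA) hxT

theorem exists_homeomorph_Icc_of_isConnected_image {X α : Type*} [TopologicalSpace X]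
    [ConditionallyCompleteLinearOrder α] [TopologicalSpace α] [OrderTopology α] {f : X → α}
    {K : Set X} (hK : IsCompact K) (hf : ContinuousOn f K) (hinj : InjOn f K)
    (himage : IsConnected (f '' K)) : ∃ a b : α, a ≤ b ∧ Nonempty (K ≃ₜ Icc a b) := by
  have : CompactSpace K := isCompact_iff_compactSpace.1 hK
  have hemb : IsEmbedding (K.domRestrict f) :=
    (hf.domRestrict.isClosedEmbedding hinj.injective).isEmbedding
  have hIcc : f '' K = Icc (sInf (f '' K)) (sSup (f '' K)) :=
    eq_Icc_of_connected_compact himage (hK.image_of_continuousOn hf)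
  have hrange : range (K.domRestrict f) = Icc (sInf (f '' K)) (sSup (f '' K)) := by
    rw [range_domRestrict, ← hIcc]
  exact ⟨_, _, nonempty_Icc.1 (hIcc ▸ himage.nonempty),
    ⟨hemb.toHomeomorph.trans (Homeomorph.setCongr hrange)⟩⟩

section LowerSet

variable {X : Type*} [TopologicalSpace X] [Preorder X] {T : Set X} {u x : X}

theorem notMem_of_mem_frontier_of_mem_interior_Iic (hT : IsLowerSet T) (hx : x ∈ frontier T)
    (hxu : x ∈ interior (Iic u)) : u ∉ T := fun hu =>
  hx.2 (interior_mono (hT.Iic_subset hu) hxu)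

theorem mem_of_mem_frontier_of_mem_interior_Ici (hT : IsLowerSet T) (hx : x ∈ frontier T)
    (hxu : x ∈ interior (Ici u)) : u ∈ T := by
  by_contra hu
  rw [← frontier_compl] at hx
  exact hx.2 (interior_mono (hT.compl.Ici_subset hu) hxu)

end LowerSet

theorem not_fst_lt_and_snd_lt_of_mem_frontier {α β : Type*} [LinearOrder α] [TopologicalSpace α]
    [OrderClosedTopology α] [LinearOrder β] [TopologicalSpace β] [OrderClosedTopology β]
    {D : Set (α × β)} {T : Set D} (hT : IsLowerSet T) {p q : D} (hp : p ∈ frontier T)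
    (hq : q ∈ frontier T) : ¬(q.1.1 < p.1.1 ∧ q.1.2 < p.1.2) := by
  intro hqp
  have hopen_above : IsOpen {s : D | q.1.1 < s.1.1 ∧ q.1.2 < s.1.2} :=
    (isOpen_lt (by fun_prop) (by fun_prop)).and (isOpen_lt (by fun_prop) (by fun_prop))
  obtain ⟨s, hqs, hsT⟩ := mem_closure_iff.1 hp.1 _ hopen_above hqp
  have hopen_below : IsOpen {r : D | r.1.1 < s.1.1 ∧ r.1.2 < s.1.2} :=
    (isOpen_lt (by fun_prop) (by fun_prop)).and (isOpen_lt (by fun_prop) (by fun_prop))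
  have hsub : {r : D | r.1.1 < s.1.1 ∧ r.1.2 < s.1.2} ⊆ Iic s := fun r hr =>
    ⟨hr.1.le, hr.2.le⟩
  exact notMem_of_mem_frontier_of_mem_interior_Iic hT hq
    (interior_maximal hsub hopen_below hqs) hsT

/-- The functional `(x, y) ↦ x - y`, whose level sets are the diagonals of direction `(1, 1)`. It
serves as the coordinate along the frontier of a lower set. -/
def diagonalOffset : ℝ × ℝ →L[ℝ] ℝ :=
  ContinuousLinearMap.fst ℝ ℝ ℝ - ContinuousLinearMap.snd ℝ ℝ ℝ

theorem diagonalOffset_apply (p : ℝ × ℝ) : diagonalOffset p = p.1 - p.2 := rfl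

theorem injOn_diagonalOffset_frontier {D : Set (ℝ × ℝ)} {T : Set D} (hT : IsLowerSet T) :
    InjOn (fun r : D => diagonalOffset r) (frontier T) := by
  intro p hp q hq hpq
  simp only [diagonalOffset_apply] at hpq
  rcases lt_trichotomy p.1.1 q.1.1 with h | h | h
  · exact (not_fst_lt_and_snd_lt_of_mem_frontier hT hq hp ⟨h, by linarith⟩).elim
  · exact Subtype.ext (Prod.ext h (by linarith))
  · exact (not_fst_lt_and_snd_lt_of_mem_frontier hT hp hq ⟨h, by linarith⟩).elim

theorem isPreconnected_diagonal {D : Set (ℝ × ℝ)} (hD : Convex ℝ D) (c : ℝ) :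
    IsPreconnected {r : D | diagonalOffset r = c} := by
  have hconvex : Convex ℝ (D ∩ diagonalOffset ⁻¹' {c}) :=
    hD.inter ((convex_singleton c).linear_preimage diagonalOffset.toLinearMap)
  rw [← IsInducing.subtypeVal.isPreconnected_image]
  change IsPreconnected (Subtype.val '' (Subtype.val ⁻¹' (diagonalOffset ⁻¹' {c})))
  rw [Subtype.image_preimage_coe]
  exact hconvex.isPreconnected

section Rectangle

variable {a b : ℝ × ℝ} {c : ℝ} {p q u : Icc a b}

theorem exists_diagonalOffset_eq_and_right_or_top (hp : diagonalOffset p < c)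
    (hq : c < diagonalOffset q) :
    ∃ u : Icc a b, diagonalOffset u = c ∧ (u.1.1 = b.1 ∨ u.1.2 = b.2) := by
  obtain ⟨⟨p₁, p₂⟩, ⟨hap₁, hap₂⟩, hpb₁, hpb₂⟩ := p
  obtain ⟨⟨q₁, q₂⟩, ⟨haq₁, haq₂⟩, hqb₁, hqb₂⟩ := q
  simp only [diagonalOffset_apply] at *
  rcases le_total (b.1 - b.2) c with hc | hc
  · exact ⟨⟨(b.1, b.1 - c), ⟨by dsimp; linarith, by dsimp; linarith⟩,
      le_rfl, by dsimp; linarith⟩, sub_sub_cancel _ _, Or.inl rfl⟩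
  · exact ⟨⟨(c + b.2, b.2), ⟨by dsimp; linarith, by dsimp; linarith⟩,
      by dsimp; linarith, le_rfl⟩, add_sub_cancel_right _ _, Or.inr rfl⟩

theorem exists_diagonalOffset_eq_and_left_or_bottom (hp : diagonalOffset p < c)
    (hq : c < diagonalOffset q) :
    ∃ v : Icc a b, diagonalOffset v = c ∧ (v.1.1 = a.1 ∨ v.1.2 = a.2) := by
  obtain ⟨⟨p₁, p₂⟩, ⟨hap₁, hap₂⟩, hpb₁, hpb₂⟩ := p
  obtain ⟨⟨q₁, q₂⟩, ⟨haq₁, haq₂⟩, hqb₁, hqb₂⟩ := q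
  simp only [diagonalOffset_apply] at *
  rcases le_total c (a.1 - a.2) with hc | hc
  · exact ⟨⟨(a.1, a.1 - c), ⟨le_rfl, by dsimp; linarith⟩,
      by dsimp; linarith, by dsimp; linarith⟩, sub_sub_cancel _ _, Or.inl rfl⟩
  · exact ⟨⟨(c + a.2, a.2), ⟨by dsimp; linarith, le_rfl⟩,
      by dsimp; linarith, by dsimp; linarith⟩, add_sub_cancel_right _ _, Or.inr rfl⟩

theorem mem_interior_Iic_of_right_or_top (hp : diagonalOffset p < diagonalOffset u)
    (hq : diagonalOffset u < diagonalOffset q) (hu : u.1.1 = b.1 ∨ u.1.2 = b.2) :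
    p ∈ interior (Iic u) ∨ q ∈ interior (Iic u) := by
  simp only [diagonalOffset_apply] at hp hq
  rcases hu with hright | htop
  · have hopen : IsOpen {r : Icc a b | r.1.2 < u.1.2} := isOpen_lt (by fun_prop) (by fun_prop)
    have hsub : {r : Icc a b | r.1.2 < u.1.2} ⊆ Iic u := fun r hr =>
      ⟨r.2.2.1.trans_eq hright.symm, hr.le⟩
    exact Or.inr (interior_maximal hsub hopen (by linarith [q.2.2.1] : q.1.2 < u.1.2))
  · have hopen : IsOpen {r : Icc a b | r.1.1 < u.1.1} := isOpen_lt (by fun_prop) (by fun_prop)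
    have hsub : {r : Icc a b | r.1.1 < u.1.1} ⊆ Iic u := fun r hr =>
      ⟨hr.le, r.2.2.2.trans_eq htop.symm⟩
    exact Or.inl (interior_maximal hsub hopen (by linarith [p.2.2.2] : p.1.1 < u.1.1))

theorem mem_interior_Ici_of_left_or_bottom (hp : diagonalOffset p < diagonalOffset u)
    (hq : diagonalOffset u < diagonalOffset q) (hu : u.1.1 = a.1 ∨ u.1.2 = a.2) :
    p ∈ interior (Ici u) ∨ q ∈ interior (Ici u) := by
  simp only [diagonalOffset_apply] at hp hq
  rcases hu with hleft | hbottom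
  · have hopen : IsOpen {r : Icc a b | u.1.2 < r.1.2} := isOpen_lt (by fun_prop) (by fun_prop)
    have hsub : {r : Icc a b | u.1.2 < r.1.2} ⊆ Ici u := fun r hr =>
      ⟨hleft.trans_le r.2.1.1, hr.le⟩
    exact Or.inl (interior_maximal hsub hopen (by linarith [p.2.1.1] : u.1.2 < p.1.2))
  · have hopen : IsOpen {r : Icc a b | u.1.1 < r.1.1} := isOpen_lt (by fun_prop) (by fun_prop)
    have hsub : {r : Icc a b | u.1.1 < r.1.1} ⊆ Ici u := fun r hr =>
      ⟨hr.le, hbottom.trans_le r.2.1.2⟩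
    exact Or.inr (interior_maximal hsub hopen (by linarith [q.2.1.2] : u.1.1 < q.1.1))

theorem ordConnected_diagonalOffset_image_frontier {T : Set (Icc a b)} (hT : IsLowerSet T) :
    OrdConnected ((fun r : Icc a b => diagonalOffset r) '' frontier T) := by
  refine ordConnected_of_Ioo ?_
  rintro _ ⟨p, hp, rfl⟩ _ ⟨q, hq, rfl⟩ - c ⟨hpc, hcq⟩
  obtain ⟨v, rfl, hv⟩ := exists_diagonalOffset_eq_and_left_or_bottom hpc hcq
  obtain ⟨u, huv, hu⟩ := exists_diagonalOffset_eq_and_right_or_top hpc hcq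
  have hvT : v ∈ T := (mem_interior_Ici_of_left_or_bottom hpc hcq hv).elim
    (mem_of_mem_frontier_of_mem_interior_Ici hT hp) (mem_of_mem_frontier_of_mem_interior_Ici hT hq)
  have huT : u ∉ T := (mem_interior_Iic_of_right_or_top (huv ▸ hpc) (huv ▸ hcq) hu).elim
    (notMem_of_mem_frontier_of_mem_interior_Iic hT hp)
    (notMem_of_mem_frontier_of_mem_interior_Iic hT hq)
  obtain ⟨r, hr, hrT⟩ := inter_frontier_nonempty_of_isPreconnected
    (isPreconnected_diagonal (convex_Icc a b) (diagonalOffset v)) ⟨v, rfl, hvT⟩ ⟨u, huv, huT⟩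
  exact ⟨r, hrT, hr⟩

end Rectangle

theorem boundary_homeomorphic_to_closed_segment_general {a b : ℝ × ℝ} {T : Set (Icc a b)}
    (hT : IsLowerSet T) (hne : T.Nonempty) (hne_univ : T ≠ univ) :
    ∃ c d : ℝ, c ≤ d ∧ Nonempty (frontier T ≃ₜ Icc c d) := by
  have : PreconnectedSpace (Icc a b) :=
    Subtype.preconnectedSpace (convex_Icc a b).isPreconnected
  have hfrontier : (frontier T).Nonempty := nonempty_frontier_iff.2 ⟨hne, hne_univ⟩
  exact exists_homeomorph_Icc_of_isConnected_image isClosed_frontier.isCompact (by fun_prop)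
    (injOn_diagonalOffset_frontier hT)
    ⟨hfrontier.image _, (ordConnected_diagonalOffset_image_frontier hT).isPreconnected⟩

theorem unitSquare_eq_Icc : unitSquare = Icc 0 1 :=
  (Icc_prod_eq (0 : ℝ × ℝ) 1).symm

/-- Let `S` be a downward closed subset of the closed unit square `D` (with respect
to the componentwise order), with `S` and `D ∖ S` nonempty.  Then the boundary
(frontier) `Γ` of `S` in the subspace topology on `D` is homeomorphic to a closed
real interval `[a,b]` with `a ≤ b` (the case `a = b` meaning a single point). -/
theorem boundary_homeomorphic_to_closed_segment (S : Set (ℝ × ℝ))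
    (hSD : S ⊆ unitSquare)
    (hdc : ∀ x ∈ S, ∀ y ∈ unitSquare, y ≤ x → y ∈ S)
    (hS : S.Nonempty) (hDS : (unitSquare \ S).Nonempty) :
    ∃ a b : ℝ, a ≤ b ∧
      Nonempty ((frontier {y : unitSquare | (y : ℝ × ℝ) ∈ S}) ≃ₜ (Set.Icc a b)) := by
  rw [unitSquare_eq_Icc] at hSD hdc hDS ⊢
  obtain ⟨s, hs⟩ := hS
  obtain ⟨d, hdD, hdS⟩ := hDS
  exact boundary_homeomorphic_to_closed_segment_general (fun x y hyx hx => hdc x hx y y.2 hyx)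
    ⟨⟨s, hSD hs⟩, hs⟩ (ne_univ_iff_exists_notMem _ |>.2 ⟨⟨d, hdD⟩, hdS⟩)
end

section
/- Let P₂ be the finite strict partial order with seven elements u, p₀, p₁, q₀, q₁, q₂, s, whose strict order is generated transitively by: u below p₀, p₁, q₀, q₁, q₂ and s; p₀ and p₁ each below q₀, q₁, q₂ and below s; q₀, q₁, q₂ each below s; with p₀, p₁ incomparable to each other and q₀, q₁, q₂ pairwise incomparable. Let F be either ℝ or ℚ. On F³ let ⊑ be the 3-dimensional causal order ((u,v,t) ⊑ (u',v',t') iff √((u'−u)²+(v'−v)²) ≤ t'−t) and ⊏ its irreflexive part; on F² let ≤ be the componentwise order and < its irreflexive part. Then the temporal formula Δ(P₂) is satisfiable over (F³, ⊑) and over (F³, ⊏), but it is not satisfiable over (F², ≤) and not satisfiable over (F², <). -/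
namespace Temporal

/-- Temporal propositional formulas: `φ ::= q | ¬φ | φ∨φ' | Fφ | Pφ`. -/
inductive TForm : Type
  | prop : ℕ → TForm
  | neg : TForm → TForm
  | or : TForm → TForm → TForm
  | fut : TForm → TForm
  | past : TForm → TForm
  deriving DecidableEq

/-- Truth of a temporal formula at a point of a Kripke structure. -/
def TSat {X : Type*} (R : X → X → Prop) (v : ℕ → Set X) : TForm → X → Prop
  | .prop n, x => x ∈ v n
  | .neg φ, x => ¬ TSat R v φ x
  | .or φ ψ, x => TSat R v φ x ∨ TSat R v ψ x
  | .fut φ, x => ∃ y, R x y ∧ TSat R v φ y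
  | .past φ, x => ∃ y, R y x ∧ TSat R v φ y

/-- Validity of a temporal formula over a Kripke frame. -/
def TValid {X : Type*} (R : X → X → Prop) (φ : TForm) : Prop :=
  ∀ (v : ℕ → Set X) (x : X), TSat R v φ x

/-- Satisfiability of a temporal formula over a Kripke frame. -/
def TSatisfiable {X : Type*} (R : X → X → Prop) (φ : TForm) : Prop :=
  ∃ (v : ℕ → Set X) (x : X), TSat R v φ x

/-- An explicit encoding of temporal formulas as natural numbers. -/
def encodeT : TForm → ℕ
  | .prop n => 5 * n
  | .neg φ => 5 * encodeT φ + 1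
  | .or φ ψ => 5 * Nat.pair (encodeT φ) (encodeT ψ) + 2
  | .fut φ => 5 * encodeT φ + 3
  | .past φ => 5 * encodeT φ + 4

/-- The inverse decoding of natural numbers as temporal formulas. -/
def decodeT (n : ℕ) : TForm :=
  if h0 : n % 5 = 0 then .prop (n / 5)
  else
    have hn : 0 < n := Nat.pos_of_ne_zero (by rintro rfl; simp at h0)
    have hlt : n / 5 < n := Nat.div_lt_self hn (by norm_num)
    have h1 : (n / 5).unpair.1 < n := lt_of_le_of_lt (Nat.unpair_left_le _) hlt
    have h2 : (n / 5).unpair.2 < n := lt_of_le_of_lt (Nat.unpair_right_le _) hlt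
    if n % 5 = 1 then .neg (decodeT (n / 5))
    else if n % 5 = 2 then .or (decodeT (n / 5).unpair.1) (decodeT (n / 5).unpair.2)
    else if n % 5 = 3 then .fut (decodeT (n / 5))
    else .past (decodeT (n / 5))

theorem decodeT_encodeT (φ : TForm) : decodeT (encodeT φ) = φ := by
  induction φ with
  | prop n => rw [encodeT, decodeT]; simp [Nat.mul_div_cancel_left, Nat.mul_mod_right]
  | neg φ ih => rw [encodeT, decodeT]; simp [Nat.mul_add_mod, Nat.mul_add_div, ih]
  | or φ ψ ih1 ih2 => rw [encodeT, decodeT]; simp [Nat.mul_add_mod, Nat.mul_add_div, ih1, ih2]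
  | fut φ ih => rw [encodeT, decodeT]; simp [Nat.mul_add_mod, Nat.mul_add_div, ih]
  | past φ ih => rw [encodeT, decodeT]; simp [Nat.mul_add_mod, Nat.mul_add_div, ih]

theorem encodeT_decodeT (n : ℕ) : encodeT (decodeT n) = n := by
  induction n using Nat.strong_induction_on with
  | _ n ih =>
    rw [decodeT]
    by_cases h0 : n % 5 = 0
    · simp only [h0, dif_pos]
      rw [encodeT]
      omega
    · have hn : 0 < n := Nat.pos_of_ne_zero (by rintro rfl; simp at h0)
      have hlt : n / 5 < n := Nat.div_lt_self hn (by norm_num)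
      have h1 : (n / 5).unpair.1 < n := lt_of_le_of_lt (Nat.unpair_left_le _) hlt
      have h2 : (n / 5).unpair.2 < n := lt_of_le_of_lt (Nat.unpair_right_le _) hlt
      rw [dif_neg h0]
      by_cases e1 : n % 5 = 1
      · rw [if_pos e1, encodeT, ih _ hlt]
        omega
      · rw [if_neg e1]
        by_cases e2 : n % 5 = 2
        · rw [if_pos e2, encodeT, ih _ h1, ih _ h2, Nat.pair_unpair]
          omega
        · rw [if_neg e2]
          by_cases e3 : n % 5 = 3
          · rw [if_pos e3, encodeT, ih _ hlt]
            omega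
          · rw [if_neg e3, encodeT, ih _ hlt]
            omega

instance : Encodable TForm :=
  ⟨encodeT, fun n => some (decodeT n), fun φ => congrArg some (decodeT_encodeT φ)⟩

instance : Denumerable TForm :=
  ⟨fun n => ⟨decodeT n, rfl, encodeT_decodeT n⟩⟩


/-- Conjunction, defined from negation and disjunction. -/
def TForm.and (a b : TForm) : TForm := .neg (.or (.neg a) (.neg b))

/-- Implication, defined from negation and disjunction. -/
def TForm.imp (a b : TForm) : TForm := .or (.neg a) b

/-- The operator `G = ¬F¬`. -/
def TForm.G (a : TForm) : TForm := .neg (.fut (.neg a))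

/-- The operator `H = ¬P¬`. -/
def TForm.H (a : TForm) : TForm := .neg (.past (.neg a))

/-- Disjunction of a list of formulas (`⊥` for the empty list). -/
def bigOr : List TForm → TForm
  | [] => TForm.neg (.or (.prop 0) (.neg (.prop 0)))
  | [a] => a
  | a :: rest => .or a (bigOr rest)

/-- Conjunction of a list of formulas (`⊤` for the empty list). -/
def bigAnd : List TForm → TForm
  | [] => TForm.or (.prop 0) (.neg (.prop 0))
  | [a] => a
  | a :: rest => TForm.and a (bigAnd rest)

/-- The formula `Δ(P)` of a finite transitive relation `P` (on `Fin n`, with a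
distinct propositional variable for each element):
`Δ(P) = G H [ ⋁_{p} p ∧ ⋀_{p≠q} ¬(p∧q) ∧ ⋀_{p≠q, p<q} ((p→Fq)∧(q→Pp))
∧ ⋀_{p≠q, ¬(p<q)} ((p→G¬q)∧(q→H¬p)) ]`. -/
def delta (n : ℕ) (lt : Fin n → Fin n → Bool) : TForm :=
  TForm.G (TForm.H (TForm.and
    (bigOr ((List.finRange n).map fun p => .prop p.val))
    (bigAnd ((List.finRange n).flatMap fun p =>
      (List.finRange n).flatMap fun q =>
        if p = q then [] else
          [TForm.and (.neg (TForm.and (.prop p.val) (.prop q.val)))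
            (if lt p q then
              TForm.and (TForm.imp (.prop p.val) (.fut (.prop q.val)))
                (TForm.imp (.prop q.val) (.past (.prop p.val)))
            else
              TForm.and (TForm.imp (.prop p.val) (TForm.G (.neg (.prop q.val))))
                (TForm.imp (.prop q.val) (TForm.H (.neg (.prop p.val)))))]))))

/-- The strict partial order `P₂`: elements `0 = u`, `1 = p₀`, `2 = p₁`,
`3 = q₀`, `4 = q₁`, `5 = q₂`, `6 = s`; `u` below all others, `p₀, p₁` below
`q₀, q₁, q₂, s`, and `q₀, q₁, q₂` below `s`, with `p₀, p₁` incomparable and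
`q₀, q₁, q₂` pairwise incomparable. -/
def ltP2 (a b : Fin 7) : Bool :=
  (a.val == 0 && b.val != 0) ||
    (decide (1 ≤ a.val) && decide (a.val ≤ 2) && decide (3 ≤ b.val)) ||
    (decide (3 ≤ a.val) && decide (a.val ≤ 5) && b.val == 6)

/-- The 3-dimensional causal order on ℝ³. -/
def caus3R (p q : ℝ × ℝ × ℝ) : Prop :=
  Real.sqrt ((q.1 - p.1) ^ 2 + (q.2.1 - p.2.1) ^ 2) ≤ q.2.2 - p.2.2

/-- The 3-dimensional causal order on ℚ³. -/
def caus3Q (p q : ℚ × ℚ × ℚ) : Prop :=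
  Real.sqrt (((q.1 : ℝ) - (p.1 : ℝ)) ^ 2 + ((q.2.1 : ℝ) - (p.2.1 : ℝ)) ^ 2) ≤
    (q.2.2 : ℝ) - (p.2.2 : ℝ)

/-!
Over a directed frame, a model of `Δ(P)` is the same thing as a temporal p-morphism from the frame
to the reflexive closure of `P`.

In space-time, label the origin `p₀`, the points strictly in its past `u`, the spacelike points `p₁`
and the interior of the future light cone `s`. Each ray of the light cone gets one of the labels
`q₀, q₁, q₂`, in such a way that every label is dense in the circle of rays. The open set of rays
that enter the causal future of a given spacelike point then carries all three labels.

In the plane, take points labelled `q₀, q₁, q₂` above a point `a` labelled `p₀`. They are pairwise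
incomparable, so one of them, `y`, lies between two others `x` and `z`, and `x ⊓ y`, `y ⊓ z` are
again labelled `p₀`. Below `y` there is a point labelled `p₁`, and above that one a point `w`
with the same label as `x`. Now `w` is to the left or to the right of `y`, and `w ⊓ y`, which is
labelled `p₁`, is comparable to `x ⊓ y` or to `y ⊓ z`, which is impossible.
-/

section Semantics

variable {X : Type*} {R : X → X → Prop} {v : ℕ → Set X} {a b : TForm} {x : X}

@[simp]
theorem tSat_and : TSat R v (a.and b) x ↔ TSat R v a x ∧ TSat R v b x := by
  simp [TForm.and, TSat]

@[simp]
theorem tSat_imp : TSat R v (a.imp b) x ↔ (TSat R v a x → TSat R v b x) := by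
  simp [TForm.imp, TSat, imp_iff_not_or]

@[simp]
theorem tSat_G : TSat R v a.G x ↔ ∀ y, R x y → TSat R v a y := by
  simp [TForm.G, TSat]

@[simp]
theorem tSat_H : TSat R v a.H x ↔ ∀ y, R y x → TSat R v a y := by
  simp [TForm.H, TSat]

@[simp]
theorem tSat_bigOr {l : List TForm} : TSat R v (bigOr l) x ↔ ∃ a ∈ l, TSat R v a x := by
  induction l using bigOr.induct <;> simp_all [bigOr, TSat]

@[simp]
theorem tSat_bigAnd {l : List TForm} : TSat R v (bigAnd l) x ↔ ∀ a ∈ l, TSat R v a x := by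
  induction l using bigAnd.induct <;> simp_all [bigAnd, TSat, em]

end Semantics

section DeltaPMorphism

variable {X ι : Type*} {R : X → X → Prop} {n : ℕ}

/-- The matrix of `Δ(P)`, i.e. the part of the formula in the scope of `G H`, at the point `z`. -/
def DeltaMatrix (R : X → X → Prop) (v : ℕ → Set X) (lt : Fin n → Fin n → Bool) (z : X) : Prop :=
  (∃ p : Fin n, z ∈ v p) ∧ ∀ p q : Fin n, p ≠ q →
    ¬(z ∈ v p ∧ z ∈ v q) ∧
    if lt p q then (z ∈ v p → ∃ y, R z y ∧ y ∈ v q) ∧ (z ∈ v q → ∃ y, R y z ∧ y ∈ v p)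
    else (z ∈ v p → ∀ y, R z y → y ∉ v q) ∧ (z ∈ v q → ∀ y, R y z → y ∉ v p)

theorem tSat_delta {v : ℕ → Set X} {lt : Fin n → Fin n → Bool} {x : X} :
    TSat R v (delta n lt) x ↔ ∀ y, R x y → ∀ z, R z y → DeltaMatrix R v lt z := by
  have mem_matrix {p q : Fin n} {a b : TForm} :
      (a ∈ if p = q then [] else [b]) ↔ p ≠ q ∧ a = b := by
    split_ifs with h <;> simp [h]
  simp only [delta, tSat_G, tSat_H]
  refine forall₂_congr fun y _ => forall₂_congr fun z _ => ?_
  simp only [tSat_and, tSat_bigOr, tSat_bigAnd, List.mem_map, List.mem_flatMap, List.mem_finRange,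
    true_and, mem_matrix, DeltaMatrix]
  refine and_congr (by simp [TSat]) ⟨fun h p q hpq => ?_, ?_⟩
  · have := h _ ⟨p, q, hpq, rfl⟩
    split_ifs at this ⊢ <;> simpa [TSat] using this
  · rintro h _ ⟨p, q, hpq, rfl⟩
    have := h p q hpq
    split_ifs at this ⊢ <;> simpa [TSat] using this

/-- A temporal p-morphism (bounded morphism for both the future and the past modality) from the
frame `(X, R)` to the reflexive closure of the finite relation `lt`. -/
structure IsPMorphism (R : X → X → Prop) (lt : ι → ι → Bool) (f : X → ι) : Prop where
  eq_or_lt {z w : X} : R z w → f z = f w ∨ lt (f z) (f w)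
  exists_up {z : X} {d : ι} : lt (f z) d → ∃ w, R z w ∧ f w = d
  exists_down {z : X} {c : ι} : lt c (f z) → ∃ w, R w z ∧ f w = c

theorem isPMorphism_and_ne_iff {lt : ι → ι → Bool} {f : X → ι} (hlt : ∀ c, lt c c = false) :
    IsPMorphism (fun z w => R z w ∧ z ≠ w) lt f ↔ IsPMorphism R lt f := by
  have ne_of_lt {z w : X} (h : lt (f z) (f w)) : z ≠ w := by
    rintro rfl
    simp [hlt] at h
  refine ⟨fun hf => ⟨fun {z w} hzw => ?_, fun h => ?_, fun h => ?_⟩,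
    fun hf => ⟨fun h => hf.eq_or_lt h.1, fun h => ?_, fun h => ?_⟩⟩
  · by_cases h : z = w
    · exact Or.inl (congrArg f h)
    · exact hf.eq_or_lt ⟨hzw, h⟩
  · obtain ⟨w, hw, rfl⟩ := hf.exists_up h
    exact ⟨w, hw.1, rfl⟩
  · obtain ⟨w, hw, rfl⟩ := hf.exists_down h
    exact ⟨w, hw.1, rfl⟩
  · obtain ⟨w, hw, rfl⟩ := hf.exists_up h
    exact ⟨w, ⟨hw, ne_of_lt h⟩, rfl⟩
  · obtain ⟨w, hw, rfl⟩ := hf.exists_down h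
    exact ⟨w, ⟨hw, ne_of_lt h⟩, rfl⟩

theorem IsPMorphism.tSatisfiable_delta [Nonempty X] {lt : Fin n → Fin n → Bool} {f : X → Fin n}
    (hf : IsPMorphism R lt f) : TSatisfiable R (delta n lt) := by
  refine ⟨fun k => {z | (f z : ℕ) = k}, Classical.arbitrary X, tSat_delta.2 fun _ _ z _ => ?_⟩
  simp only [DeltaMatrix, Set.mem_ofPred_eq, Fin.val_inj]
  refine ⟨⟨f z, rfl⟩, fun p q hpq => ⟨fun h => hpq (h.1.symm.trans h.2), ?_⟩⟩
  split_ifs with h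
  · exact ⟨by rintro rfl; exact hf.exists_up h, by rintro rfl; exact hf.exists_down h⟩
  · constructor <;> (rintro rfl w hw rfl; exact (hf.eq_or_lt hw).elim hpq h)

theorem exists_isPMorphism_of_tSatisfiable_delta {lt : Fin n → Fin n → Bool}
    (hlt : ∀ c, lt c c = false) (hR : ∀ x z, ∃ y, R x y ∧ R z y)
    (h : TSatisfiable R (delta n lt)) : ∃ f, IsPMorphism R lt f := by
  obtain ⟨v, x, hx⟩ := h
  have matrix (z : X) : DeltaMatrix R v lt z :=
    let ⟨y, hxy, hzy⟩ := hR x z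
    tSat_delta.1 hx y hxy z hzy
  choose f mem_f using fun z => (matrix z).1
  have f_eq {z : X} {p : Fin n} (hz : z ∈ v p) : f z = p := by
    by_contra hne
    exact ((matrix z).2 _ _ hne).1 ⟨mem_f z, hz⟩
  have ne_of_lt {c d : Fin n} (h : lt c d) : c ≠ d := by
    rintro rfl
    simp [hlt] at h
  refine ⟨f, ⟨fun {z w} hzw => or_iff_not_imp_left.2 fun hne => ?_, fun {z d} h => ?_,
    fun {z c} h => ?_⟩⟩
  · by_contra h
    have := ((matrix z).2 _ _ hne).2
    rw [if_neg h] at this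
    exact this.1 (mem_f z) w hzw (mem_f w)
  · have := ((matrix z).2 _ _ (ne_of_lt h)).2
    rw [if_pos h] at this
    obtain ⟨w, hw, hd⟩ := this.1 (mem_f z)
    exact ⟨w, hw, f_eq hd⟩
  · have := ((matrix z).2 _ _ (ne_of_lt h)).2
    rw [if_pos h] at this
    obtain ⟨w, hw, hc⟩ := this.2 (mem_f z)
    exact ⟨w, hw, f_eq hc⟩

end DeltaPMorphism

section P2

/-- The element `p_j` of `P₂`. -/
def lowerP2 (j : Fin 2) : Fin 7 := ⟨j + 1, by omega⟩

/-- The element `q_i` of `P₂`. -/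
def upperP2 (i : Fin 3) : Fin 7 := ⟨i + 3, by omega⟩

theorem lowerP2_injective : Function.Injective lowerP2 := by decide

theorem lowerP2_ne_zero : ∀ j, lowerP2 j ≠ 0 := by decide

theorem lowerP2_ne_six : ∀ j, lowerP2 j ≠ 6 := by decide

theorem upperP2_injective : Function.Injective upperP2 := by decide

theorem upperP2_ne_lowerP2 : ∀ i j, upperP2 i ≠ lowerP2 j := by decide

theorem upperP2_ne_zero : ∀ i, upperP2 i ≠ 0 := by decide

theorem upperP2_ne_six : ∀ i, upperP2 i ≠ 6 := by decide

theorem ltP2_irrefl : ∀ c, ltP2 c c = false := by decide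

theorem zero_eq_or_ltP2 : ∀ c, 0 = c ∨ ltP2 0 c := by decide

theorem eq_six_or_ltP2 : ∀ c, c = 6 ∨ ltP2 c 6 := by decide

theorem ltP2_lowerP2_upperP2 : ∀ j i, ltP2 (lowerP2 j) (upperP2 i) := by decide

theorem ltP2_cases : ∀ c d, ltP2 c d →
    (c = 0 ∧ ∃ j, d = lowerP2 j) ∨ (c = 0 ∧ ∃ i, d = upperP2 i) ∨ (c = 0 ∧ d = 6) ∨
    (∃ j i, c = lowerP2 j ∧ d = upperP2 i) ∨ (∃ j, c = lowerP2 j ∧ d = 6) ∨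
    (∃ i, c = upperP2 i ∧ d = 6) := by
  decide

theorem ltP2_induction {r : Fin 7 → Fin 7 → Prop}
    (trans : ∀ {a b c}, r a b → r b c → r a c) (bot_lower : ∀ j, r 0 (lowerP2 j))
    (lower_upper : ∀ j i, r (lowerP2 j) (upperP2 i)) (upper_top : ∀ i, r (upperP2 i) 6)
    {c d : Fin 7} (h : ltP2 c d) : r c d := by
  have lower_top (j : Fin 2) : r (lowerP2 j) 6 := trans (lower_upper j 0) (upper_top 0)
  rcases ltP2_cases c d h with ⟨rfl, j, rfl⟩ | ⟨rfl, i, rfl⟩ | ⟨rfl, rfl⟩ | ⟨j, i, rfl, rfl⟩ |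
    ⟨j, rfl, rfl⟩ | ⟨i, rfl, rfl⟩
  · exact bot_lower j
  · exact trans (bot_lower 0) (lower_upper 0 i)
  · exact trans (bot_lower 0) (lower_top 0)
  · exact lower_upper j i
  · exact lower_top j
  · exact upper_top i

variable {X : Type*} {R : X → X → Prop} {f : X → Fin 7}

theorem isPMorphism_ltP2_of_covers (trans : ∀ {x y z}, R x y → R y z → R x z)
    (eq_or_lt : ∀ {x y}, R x y → f x = f y ∨ ltP2 (f x) (f y))
    (bot_up : ∀ j x, f x = 0 → ∃ y, R x y ∧ f y = lowerP2 j)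
    (lower_up : ∀ j i x, f x = lowerP2 j → ∃ y, R x y ∧ f y = upperP2 i)
    (upper_up : ∀ i x, f x = upperP2 i → ∃ y, R x y ∧ f y = 6)
    (lower_down : ∀ j x, f x = lowerP2 j → ∃ y, R y x ∧ f y = 0)
    (upper_down : ∀ j i x, f x = upperP2 i → ∃ y, R y x ∧ f y = lowerP2 j)
    (top_down : ∀ i x, f x = 6 → ∃ y, R y x ∧ f y = upperP2 i) :
    IsPMorphism R ltP2 f where
  eq_or_lt := eq_or_lt
  exists_up {x d} h := by
    refine ltP2_induction (r := fun c d => ∀ x, f x = c → ∃ y, R x y ∧ f y = d)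
      (fun hab hbc x hx => ?_) bot_up lower_up upper_up h x rfl
    obtain ⟨y, hxy, hy⟩ := hab x hx
    obtain ⟨z, hyz, hz⟩ := hbc y hy
    exact ⟨z, trans hxy hyz, hz⟩
  exists_down {x c} h := by
    refine ltP2_induction (r := fun c d => ∀ x, f x = d → ∃ y, R y x ∧ f y = c)
      (fun hab hbc x hx => ?_) lower_down upper_down top_down h x rfl
    obtain ⟨y, hyx, hy⟩ := hbc x hx
    obtain ⟨z, hzy, hz⟩ := hab y hy
    exact ⟨z, trans hzy hyx, hz⟩

theorem eq_of_rel_of_upperP2 (hf : IsPMorphism R ltP2 f) {x y : X} {i i' : Fin 3}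
    (hx : f x = upperP2 i) (hy : f y = upperP2 i') (hxy : R x y) : i = i' := by
  have antichain : ∀ i i', upperP2 i = upperP2 i' ∨ ltP2 (upperP2 i) (upperP2 i') → i = i' := by
    decide
  exact antichain i i' (hx ▸ hy ▸ hf.eq_or_lt hxy)

theorem eq_of_rel_of_lowerP2 (hf : IsPMorphism R ltP2 f) {x y : X} {j j' : Fin 2}
    (hx : f x = lowerP2 j) (hy : f y = lowerP2 j') (hxy : R x y) : j = j' := by
  have antichain : ∀ j j', lowerP2 j = lowerP2 j' ∨ ltP2 (lowerP2 j) (lowerP2 j') → j = j' := by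
    decide
  exact antichain j j' (hx ▸ hy ▸ hf.eq_or_lt hxy)

theorem exists_apply_eq_lowerP2 [Nonempty X] (hf : IsPMorphism R ltP2 f) (j : Fin 2) :
    ∃ a, f a = lowerP2 j := by
  have lower_lt_top : ∀ j, ltP2 (lowerP2 j) 6 := by decide
  obtain ⟨s, hs⟩ : ∃ s, f s = 6 := by
    rcases eq_six_or_ltP2 (f (Classical.arbitrary X)) with h | h
    · exact ⟨_, h⟩
    · obtain ⟨s, -, hs⟩ := hf.exists_up h
      exact ⟨s, hs⟩
  obtain ⟨a, -, ha⟩ := hf.exists_down (hs ▸ lower_lt_top j)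
  exact ⟨a, ha⟩

theorem apply_inf_eq_lowerP2 {L : Type*} [SemilatticeInf L] {f : L → Fin 7}
    (hf : IsPMorphism (· ≤ ·) ltP2 f) {a x y : L} {j : Fin 2} {i i' : Fin 3} (hii' : i ≠ i')
    (ha : f a = lowerP2 j) (hx : f x = upperP2 i) (hy : f y = upperP2 i') (hax : a ≤ x)
    (hay : a ≤ y) : f (x ⊓ y) = lowerP2 j := by
  have between : ∀ i i' j c, i ≠ i' → (lowerP2 j = c ∨ ltP2 (lowerP2 j) c) →
      (c = upperP2 i ∨ ltP2 c (upperP2 i)) → (c = upperP2 i' ∨ ltP2 c (upperP2 i')) →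
      c = lowerP2 j := by
    decide
  exact between i i' j _ hii' (ha ▸ hf.eq_or_lt (le_inf hax hay)) (hx ▸ hf.eq_or_lt inf_le_left)
    (hy ▸ hf.eq_or_lt inf_le_right)

end P2

section Plane

variable {α β : Type*} [LinearOrder α] [LinearOrder β]

/-- `LeftOf x y`: the point `x` lies weakly to the upper left of `y`. This orders any antichain of
the plane linearly. -/
def LeftOf (x y : α × β) : Prop := x.1 ≤ y.1 ∧ y.2 ≤ x.2

theorem leftOf_or_leftOf {x y : α × β} (hxy : ¬x ≤ y) (hyx : ¬y ≤ x) :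
    LeftOf x y ∨ LeftOf y x := by
  rw [Prod.le_def] at hxy hyx
  grind [LeftOf]

theorem inf_le_inf_or_of_leftOf {x y w : α × β} (hx : LeftOf x y) (hw : LeftOf w y) :
    x ⊓ y ≤ w ⊓ y ∨ w ⊓ y ≤ x ⊓ y := by
  have inf_eq {z : α × β} (hz : LeftOf z y) : z ⊓ y = (z.1, y.2) :=
    Prod.ext (inf_eq_left.2 hz.1) (inf_eq_right.2 hz.2)
  simpa [inf_eq hx, inf_eq hw] using le_total x.1 w.1

theorem inf_le_inf_or_of_leftOf' {x y w : α × β} (hx : LeftOf y x) (hw : LeftOf y w) :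
    x ⊓ y ≤ w ⊓ y ∨ w ⊓ y ≤ x ⊓ y := by
  have inf_eq {z : α × β} (hz : LeftOf y z) : z ⊓ y = (y.1, z.2) :=
    Prod.ext (inf_eq_right.2 hz.1) (inf_eq_left.2 hz.2)
  simpa [inf_eq hx, inf_eq hw] using le_total x.2 w.2

theorem exists_path_of_total {r : Fin 3 → Fin 3 → Prop} (hr : ∀ i j, i ≠ j → r i j ∨ r j i) :
    ∃ i j k, i ≠ j ∧ k ≠ j ∧ r i j ∧ r j k := by
  by_contra! no_path
  have not_rel {i j k : Fin 3} (hij : i ≠ j) (hkj : k ≠ j) (hki : k ≠ i) : ¬r i j := fun h => by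
    have hkj' : r k j := (hr k j hkj).resolve_right (no_path i j k hij hkj h)
    rcases hr i k hki.symm with hik | hki'
    · exact no_path i k j hki.symm hkj.symm hik hkj'
    · exact no_path k i j hki hij.symm hki' h
  exact (hr 0 1 (by decide)).elim (not_rel (k := 2) (by decide) (by decide) (by decide))
    (not_rel (k := 2) (by decide) (by decide) (by decide))

variable {f : α × β → Fin 7}

theorem not_leftOf_and_leftOf (hf : IsPMorphism (· ≤ ·) ltP2 f) {a x y z : α × β} {i j k : Fin 3}
    (hij : i ≠ j) (hkj : k ≠ j) (ha : f a = lowerP2 0) (hx : f x = upperP2 i)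
    (hy : f y = upperP2 j) (hz : f z = upperP2 k) (hax : a ≤ x) (hay : a ≤ y) (haz : a ≤ z) :
    ¬(LeftOf x y ∧ LeftOf y z) := by
  rintro ⟨hxy, hyz⟩
  obtain ⟨b, hby, hb⟩ := hf.exists_down (hy ▸ ltP2_lowerP2_upperP2 1 j)
  obtain ⟨w, hbw, hw⟩ := hf.exists_up (hb ▸ ltP2_lowerP2_upperP2 1 i)
  have not_comparable {c d : α × β} (hc : f c = lowerP2 0) (hd : f d = lowerP2 1) :
      ¬(c ≤ d ∨ d ≤ c) := by
    rintro (h | h)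
    · exact absurd (eq_of_rel_of_lowerP2 hf hc hd h) (by decide)
    · exact absurd (eq_of_rel_of_lowerP2 hf hd hc h) (by decide)
  have hwy : f (w ⊓ y) = lowerP2 1 := apply_inf_eq_lowerP2 hf hij hb hw hy hbw hby
  rcases leftOf_or_leftOf (fun h => hij (eq_of_rel_of_upperP2 hf hw hy h))
    (fun h => hij (eq_of_rel_of_upperP2 hf hy hw h).symm) with w_left | w_right
  · exact not_comparable (apply_inf_eq_lowerP2 hf hij ha hx hy hax hay) hwy
      (inf_le_inf_or_of_leftOf hxy w_left)
  · exact not_comparable (apply_inf_eq_lowerP2 hf hkj ha hz hy haz hay) hwy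
      (inf_le_inf_or_of_leftOf' hyz w_right)

theorem not_isPMorphism_ltP2_prod [Nonempty α] [Nonempty β] : ¬IsPMorphism (· ≤ ·) ltP2 f := by
  intro hf
  obtain ⟨a, ha⟩ := exists_apply_eq_lowerP2 hf 0
  choose x hax hx using fun i => hf.exists_up (ha ▸ ltP2_lowerP2_upperP2 0 i)
  have leftOf_total (i j : Fin 3) (hij : i ≠ j) : LeftOf (x i) (x j) ∨ LeftOf (x j) (x i) :=
    leftOf_or_leftOf (fun h => hij (eq_of_rel_of_upperP2 hf (hx i) (hx j) h))
      (fun h => hij (eq_of_rel_of_upperP2 hf (hx j) (hx i) h).symm)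
  obtain ⟨i, j, k, hij, hkj, hleft⟩ := exists_path_of_total leftOf_total
  exact not_leftOf_and_leftOf hf hij hkj ha (hx i) (hx j) (hx k) (hax i) (hax j) (hax k) hleft

end Plane

section Coloring

open Cardinal

universe u

/-- Greedy choice along a well-order of type `#ι`: at each stage fewer than `#ι` points have been
used. -/
theorem exists_injective_forall_mem {ι α : Type u} {A : ι → Set α} (hA : ∀ i, #ι ≤ #(A i)) :
    ∃ f : ι → α, Function.Injective f ∧ ∀ i, f i ∈ A i := by
  obtain ⟨_, _, hι⟩ := exists_ord_eq_type_lt ι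
  have exists_unused (i : ι) (g : ∀ j, j < i → α) :
      ∃ a ∈ A i, ∀ j (hj : j < i), g j hj ≠ a := by
    have hcard : #(Set.range fun j : Set.Iio i => g j j.2) < #(A i) :=
      mk_range_le.trans_lt ((mk_Iio_lt i hι).trans_le (hA i))
    obtain ⟨a, ha, hunused⟩ := sdiff_nonempty_of_mk_lt_mk hcard
    exact ⟨a, ha, fun j hj h => hunused ⟨⟨j, hj⟩, h⟩⟩
  choose pick pick_mem pick_ne using exists_unused
  set f : ι → α := wellFounded_lt.fix pick
  have f_eq (i : ι) : f i = pick i fun j _ => f j := wellFounded_lt.fix_eq pick i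
  have f_ne {i j : ι} (h : j < i) : f j ≠ f i :=
    f_eq i ▸ pick_ne i (fun j _ => f j) j h
  refine ⟨f, fun i j hij => ?_, fun i => f_eq i ▸ pick_mem i _⟩
  by_contra hne
  exact (lt_or_gt_of_ne hne).elim (f_ne · hij) (f_ne · hij.symm)

theorem mk_le_mk_Ioo {F : Type u} [Field F] [LinearOrder F] [IsStrictOrderedRing F] {a b : F}
    (hab : a < b) : #F ≤ #(Set.Ioo a b) := by
  have hpos : 0 < (b - a) / 2 := half_pos (sub_pos.2 hab)
  have rescale_inj : Set.InjOn (fun x : F => (a + b) / 2 + (b - a) / 2 * x) (Set.Ioo (-1) 1) :=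
    fun x _ y _ h => mul_left_cancel₀ hpos.ne' (add_left_cancel h)
  calc #F = #(Set.Ioo (-1 : F) 1) := mk_congr (orderIsoIooNegOneOne F).toEquiv
    _ = _ := (mk_image_eq_of_injOn _ _ rescale_inj).symm
    _ ≤ #(Set.Ioo a b) := mk_le_mk_of_subset <| by
      rintro _ ⟨x, ⟨hx, hx'⟩, rfl⟩
      constructor <;> nlinarith

theorem exists_coloring_dense_preimage (F : Type u) [Field F] [LinearOrder F]
    [IsStrictOrderedRing F] [TopologicalSpace F] [OrderTopology F] (k : ℕ) [NeZero k] :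
    ∃ χ : F → Fin k, ∀ i, Dense (χ ⁻¹' {i}) := by
  let Interval := {I : F × F // I.1 < I.2}
  have hF : ℵ₀ ≤ #F := aleph0_le_mk F
  have hInterval : #Interval ≤ #F :=
    (mk_subtype_le _).trans_eq (by rw [mk_prod, lift_id, mul_eq_self hF])
  have hcard : #(Interval × Fin k) ≤ #F := by
    rw [mk_prod]
    exact mul_le_of_le hF (by rwa [Cardinal.lift_uzero]) ((lift_le_aleph0.2 mk_le_aleph0).trans hF)
  obtain ⟨f, f_inj, f_mem⟩ := exists_injective_forall_mem
    (A := fun p : Interval × Fin k => Set.Ioo p.1.1.1 p.1.1.2)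
    fun p => hcard.trans (mk_le_mk_Ioo p.1.2)
  refine ⟨Function.extend f Prod.snd 0, fun i => dense_of_exists_between fun a b hab => ?_⟩
  exact ⟨f (⟨(a, b), hab⟩, i), f_inj.extend_apply _ _ _, f_mem (⟨(a, b), hab⟩, i)⟩

end Coloring

section LightCone

variable {F : Type*} [Field F]

/-- The Minkowski form of signature `(−, −, +)` on `F³`, with the time coordinate last. -/
def minkowski (v w : F × F × F) : F := v.2.2 * w.2.2 - v.1 * w.1 - v.2.1 * w.2.1

theorem minkowski_add_self (v w : F × F × F) :
    minkowski (v + w) (v + w) = minkowski v v + 2 * minkowski v w + minkowski w w := by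
  simp only [minkowski, Prod.fst_add, Prod.snd_add]
  ring

theorem minkowski_sub_self (v w : F × F × F) :
    minkowski (v - w) (v - w) = minkowski v v - 2 * minkowski v w + minkowski w w := by
  simp only [minkowski, Prod.fst_sub, Prod.snd_sub]
  ring

theorem minkowski_comm (v w : F × F × F) : minkowski v w = minkowski w v := by
  simp only [minkowski, mul_comm]

theorem minkowski_neg_self (v : F × F × F) : minkowski (-v) (-v) = minkowski v v := by
  simp [minkowski]

theorem minkowski_smul_left (r : F) (v w : F × F × F) :
    minkowski (r • v) w = r * minkowski v w := by
  simp only [minkowski, Prod.smul_fst, Prod.smul_snd, smul_eq_mul]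
  ring

theorem minkowski_smul_right (r : F) (v w : F × F × F) :
    minkowski v (r • w) = r * minkowski v w := by
  simp only [minkowski, Prod.smul_fst, Prod.smul_snd, smul_eq_mul]
  ring

/-- The tangent of half the polar angle of the spatial part of a lightlike vector, a coordinate on
the rays of the light cone. Division by zero makes it vanish on the ray `x = -t`, which therefore
shares its slope with the ray `x = t`. -/
def slope (v : F × F × F) : F := v.2.1 / (v.2.2 + v.1)

theorem slope_smul {r : F} (hr : r ≠ 0) (v : F × F × F) : slope (r • v) = slope v := by
  simp only [slope, Prod.smul_fst, Prod.smul_snd, smul_eq_mul, ← mul_add]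
  exact mul_div_mul_left _ _ hr

/-- The stereographic parametrization of the rays of the light cone other than `x = -t`. -/
def lightVec (m : F) : F × F × F := (1 - m ^ 2, 2 * m, 1 + m ^ 2)

theorem minkowski_lightVec_self (m : F) : minkowski (lightVec m) (lightVec m) = 0 := by
  simp only [minkowski, lightVec]
  ring

variable [LinearOrder F] [IsStrictOrderedRing F]

theorem slope_lightVec (m : F) : slope (lightVec m) = m := by
  simp only [slope, lightVec]
  field_simp
  ring

theorem lightVec_time_pos (m : F) : 0 < (lightVec m).2.2 := by
  simp only [lightVec]
  positivity

/-- The closed future light cone with apex at the origin. -/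
def futureCone (F : Type*) [Field F] [LinearOrder F] : Set (F × F × F) :=
  {v | 0 ≤ v.2.2 ∧ 0 ≤ minkowski v v}

theorem minkowski_nonneg {v w : F × F × F} (hv : v ∈ futureCone F) (hw : w ∈ futureCone F) :
    0 ≤ minkowski v w := by
  obtain ⟨⟨hvt, hv⟩, ⟨hwt, hw⟩⟩ := And.intro hv hw
  rw [minkowski] at hv hw
  have cauchy_schwarz : (v.1 * w.1 + v.2.1 * w.2.1) ^ 2 ≤ (v.2.2 * w.2.2) ^ 2 :=
    calc (v.1 * w.1 + v.2.1 * w.2.1) ^ 2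
        ≤ (v.1 ^ 2 + v.2.1 ^ 2) * (w.1 ^ 2 + w.2.1 ^ 2) := by
          linarith [sq_nonneg (v.1 * w.2.1 - v.2.1 * w.1)]
      _ ≤ v.2.2 ^ 2 * w.2.2 ^ 2 := by gcongr <;> linarith
      _ = (v.2.2 * w.2.2) ^ 2 := (mul_pow _ _ _).symm
  have := le_of_abs_le (abs_le_of_sq_le_sq cauchy_schwarz (mul_nonneg hvt hwt))
  rw [minkowski]
  linarith

theorem add_mem_futureCone {v w : F × F × F} (hv : v ∈ futureCone F) (hw : w ∈ futureCone F) :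
    v + w ∈ futureCone F :=
  ⟨add_nonneg hv.1 hw.1, by
    linarith [minkowski_add_self v w, minkowski_nonneg hv hw, hv.2, hw.2]⟩

theorem minkowski_add_self_pos {v w : F × F × F} (hv : v ∈ futureCone F)
    (hv_pos : 0 < minkowski v v) (hw : w ∈ futureCone F) : 0 < minkowski (v + w) (v + w) := by
  linarith [minkowski_add_self v w, minkowski_nonneg hv hw, hw.2]

theorem eq_zero_of_minkowski_self_nonneg {v : F × F × F} (ht : v.2.2 = 0) (hv : 0 ≤ minkowski v v) :
    v = 0 := by
  rw [minkowski, ht] at hv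
  have hx : v.1 = 0 := by nlinarith
  have hy : v.2.1 = 0 := by nlinarith
  exact Prod.ext hx (Prod.ext hy ht)

theorem slope_eq_of_minkowski_eq_zero {v w : F × F × F} (hv : minkowski v v = 0)
    (hw : minkowski w w = 0) (hvw : minkowski v w = 0) (hvt : v.2.2 ≠ 0) (hwt : w.2.2 ≠ 0) :
    slope v = slope w := by
  have sum_sq : (w.2.2 * v.1 - v.2.2 * w.1) ^ 2 + (w.2.2 * v.2.1 - v.2.2 * w.2.1) ^ 2 = 0 := by
    simp only [minkowski] at hv hw hvw
    linear_combination 2 * v.2.2 * w.2.2 * hvw - w.2.2 ^ 2 * hv - v.2.2 ^ 2 * hw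
  obtain ⟨hx, hy⟩ := (add_eq_zero_iff_of_nonneg (sq_nonneg _) (sq_nonneg _)).1 sum_sq
  have proportional : w.2.2 • v = v.2.2 • w :=
    Prod.ext (sub_eq_zero.1 (sq_eq_zero_iff.1 hx))
      (Prod.ext (sub_eq_zero.1 (sq_eq_zero_iff.1 hy)) (mul_comm _ _))
  rw [← slope_smul hwt, proportional, slope_smul hvt]

end LightCone

section CausalOrder

variable {F : Type*} [Field F] [LinearOrder F]

/-- The causal order of three-dimensional Minkowski space over an ordered field, with
`√(x² + y²) ≤ t` expressed as `0 ≤ t ∧ 0 ≤ t² - x² - y²` to avoid square roots. -/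
def CausalLE (p q : F × F × F) : Prop := q - p ∈ futureCone F

theorem CausalLE.trans [IsStrictOrderedRing F] {p q r : F × F × F} (hpq : CausalLE p q)
    (hqr : CausalLE q r) : CausalLE p r := by
  simpa [CausalLE] using add_mem_futureCone hqr hpq

theorem caus3R_eq_causalLE : caus3R = CausalLE := by
  ext p q
  simp only [caus3R, Real.sqrt_le_iff, CausalLE, futureCone, minkowski, Set.mem_ofPred_eq,
    Prod.fst_sub, Prod.snd_sub]
  grind

theorem caus3Q_eq_causalLE : caus3Q = CausalLE := by
  ext p q
  simp only [caus3Q, Real.sqrt_le_iff, CausalLE, futureCone, minkowski, Set.mem_ofPred_eq,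
    Prod.fst_sub, Prod.snd_sub]
  norm_cast
  grind

end CausalOrder

section ConeLabel

variable {F : Type*} [Field F] [LinearOrder F] {χ : F → Fin 3} {v : F × F × F} {i : Fin 3}

/-- The labelling of `F³` by `P₂` induced by a coloring `χ` of the slopes: `u` strictly in the past
of the origin, `p₀` at the origin, `p₁` at the spacelike points, `s` inside the future light cone
and `q_i` on its rays of color `i`. -/
def coneLabel (χ : F → Fin 3) (v : F × F × F) : Fin 7 :=
  if minkowski v v < 0 then lowerP2 1
  else if v.2.2 < 0 then 0
  else if v.2.2 = 0 then lowerP2 0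
  else if 0 < minkowski v v then 6
  else upperP2 (χ (slope v))

theorem coneLabel_eq_zero : coneLabel χ v = 0 ↔ v.2.2 < 0 ∧ 0 ≤ minkowski v v := by
  unfold coneLabel
  split_ifs <;> grind [lowerP2_ne_zero, upperP2_ne_zero]

theorem coneLabel_eq_lowerP2_zero [IsStrictOrderedRing F] : coneLabel χ v = lowerP2 0 ↔ v = 0 := by
  constructor
  · unfold coneLabel
    split_ifs <;> grind [lowerP2_injective.eq_iff, lowerP2_ne_zero, lowerP2_ne_six,
      upperP2_ne_lowerP2, eq_zero_of_minkowski_self_nonneg]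
  · rintro rfl
    simp [coneLabel, minkowski]

theorem coneLabel_eq_lowerP2_one : coneLabel χ v = lowerP2 1 ↔ minkowski v v < 0 := by
  unfold coneLabel
  split_ifs <;> grind [lowerP2_injective.eq_iff, lowerP2_ne_zero, lowerP2_ne_six,
    upperP2_ne_lowerP2]

theorem coneLabel_eq_upperP2 :
    coneLabel χ v = upperP2 i ↔ 0 < v.2.2 ∧ minkowski v v = 0 ∧ χ (slope v) = i := by
  unfold coneLabel
  split_ifs <;>
    grind [upperP2_injective.eq_iff, upperP2_ne_lowerP2, upperP2_ne_zero, upperP2_ne_six]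

theorem coneLabel_eq_six : coneLabel χ v = 6 ↔ 0 < v.2.2 ∧ 0 < minkowski v v := by
  unfold coneLabel
  split_ifs <;> grind [lowerP2_ne_six, upperP2_ne_six]

variable [IsStrictOrderedRing F]

theorem eq_zero_or_of_mem_futureCone (hv : v ∈ futureCone F) :
    v = 0 ∨ 0 < v.2.2 ∧ minkowski v v = 0 ∨ 0 < v.2.2 ∧ 0 < minkowski v v := by
  rcases hv.1.eq_or_lt with ht | ht
  · exact Or.inl (eq_zero_of_minkowski_self_nonneg ht.symm hv.2)
  · rcases hv.2.eq_or_lt with hQ | hQ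
    · exact Or.inr (Or.inl ⟨ht, hQ.symm⟩)
    · exact Or.inr (Or.inr ⟨ht, hQ⟩)

theorem slope_eq_of_causalLE {v w : F × F × F} (hvw : CausalLE v w) (hvt : 0 < v.2.2)
    (hv : minkowski v v = 0) (hwt : 0 < w.2.2) (hw : minkowski w w = 0) : slope v = slope w := by
  have nonneg : 0 ≤ minkowski v w := minkowski_nonneg ⟨hvt.le, hv.ge⟩ ⟨hwt.le, hw.ge⟩
  have nonpos : minkowski v w ≤ 0 := by linarith [hvw.2, minkowski_sub_self w v, minkowski_comm v w]
  exact slope_eq_of_minkowski_eq_zero hv hw (nonpos.antisymm nonneg) hvt.ne' hwt.ne'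

theorem coneLabel_eq_or_lt_of_spacelike {v w : F × F × F} (hvw : CausalLE v w)
    (hv : minkowski v v < 0) :
    coneLabel χ v = coneLabel χ w ∨ ltP2 (coneLabel χ v) (coneLabel χ w) := by
  rw [coneLabel_eq_lowerP2_one.2 hv]
  rcases lt_or_ge (minkowski w w) 0 with hw | hw
  · exact Or.inl (coneLabel_eq_lowerP2_one.2 hw).symm
  have hwt : 0 < w.2.2 := by
    by_contra! hwt
    have w_le_zero : CausalLE w 0 := by
      simpa [CausalLE, futureCone, minkowski_neg_self] using And.intro hwt hw
    have v_le_zero : CausalLE v 0 := hvw.trans w_le_zero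
    exact hv.not_ge (by simpa [minkowski_neg_self] using v_le_zero.2)
  rcases hw.eq_or_lt with hw | hw
  · rw [coneLabel_eq_upperP2.2 ⟨hwt, hw.symm, rfl⟩]
    exact Or.inr (ltP2_lowerP2_upperP2 _ _)
  · rw [coneLabel_eq_six.2 ⟨hwt, hw⟩]
    exact eq_six_or_ltP2 _

theorem coneLabel_eq_or_lt_of_mem_futureCone {v w : F × F × F} (hvw : CausalLE v w)
    (hv : v ∈ futureCone F) :
    coneLabel χ v = coneLabel χ w ∨ ltP2 (coneLabel χ v) (coneLabel χ w) := by
  have w_eq : v + (w - v) = w := add_sub_cancel v w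
  have w_mem : w ∈ futureCone F := w_eq ▸ add_mem_futureCone hv hvw
  rcases eq_zero_or_of_mem_futureCone w_mem with rfl | ⟨hwt, hw⟩ | hw
  · have v_eq : v = 0 := eq_zero_of_minkowski_self_nonneg
      (le_antisymm (by simpa using hvw.1) hv.1) hv.2
    exact Or.inl (congrArg _ v_eq)
  · rw [coneLabel_eq_upperP2.2 ⟨hwt, hw, rfl⟩]
    rcases eq_zero_or_of_mem_futureCone hv with rfl | ⟨hvt, hv_light⟩ | ⟨-, hv_time⟩
    · rw [coneLabel_eq_lowerP2_zero.2 rfl]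
      exact Or.inr (ltP2_lowerP2_upperP2 _ _)
    · have := slope_eq_of_causalLE hvw hvt hv_light hwt hw
      exact Or.inl (coneLabel_eq_upperP2.2 ⟨hvt, hv_light, congrArg χ this⟩)
    · have := minkowski_add_self_pos hv hv_time hvw
      rw [w_eq, hw] at this
      exact absurd this (lt_irrefl 0)
  · rw [coneLabel_eq_six.2 hw]
    exact eq_six_or_ltP2 _

theorem coneLabel_eq_or_lt {v w : F × F × F} (hvw : CausalLE v w) :
    coneLabel χ v = coneLabel χ w ∨ ltP2 (coneLabel χ v) (coneLabel χ w) := by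
  rcases lt_or_ge (minkowski v v) 0 with hv | hv
  · exact coneLabel_eq_or_lt_of_spacelike hvw hv
  rcases lt_or_ge v.2.2 0 with hvt | hvt
  · rw [coneLabel_eq_zero.2 ⟨hvt, hv⟩]
    exact zero_eq_or_ltP2 _
  · exact coneLabel_eq_or_lt_of_mem_futureCone hvw ⟨hvt, hv⟩

theorem exists_causalGE_coneLabel_eq_zero (v : F × F × F) :
    ∃ w, CausalLE w v ∧ coneLabel χ w = 0 := by
  have sq_add_sq_le : v.1 ^ 2 + v.2.1 ^ 2 ≤ (|v.1| + |v.2.1|) ^ 2 := by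
    nlinarith [sq_abs v.1, sq_abs v.2.1, abs_nonneg v.1, abs_nonneg v.2.1]
  set s := 1 + |v.1| + |v.2.1| + |v.2.2|
  have hs_pos : 0 < s := by positivity
  have sq_le : v.1 ^ 2 + v.2.1 ^ 2 ≤ s ^ 2 := sq_add_sq_le.trans <| by
    gcongr
    linarith [abs_nonneg v.2.2]
  refine ⟨(v.1, v.2.1, -s), ⟨?_, ?_⟩, coneLabel_eq_zero.2 ⟨neg_neg_of_pos hs_pos, ?_⟩⟩
  · simp only [Prod.snd_sub]
    linarith [neg_abs_le v.2.2, abs_nonneg v.1, abs_nonneg v.2.1]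
  · simp only [minkowski, Prod.fst_sub, Prod.snd_sub]
    nlinarith
  · simp only [minkowski]
    linarith

theorem exists_causalLE_spacelike {v : F × F × F} (hvt : v.2.2 < 0) :
    ∃ w, CausalLE v w ∧ minkowski w w < 0 := by
  have lightlike_step (a : F) (ha : a ^ 2 = 1) :
      CausalLE v (v.1 + a * v.2.2, v.2.1, 0) := by
    constructor <;> simp only [minkowski, Prod.fst_sub, Prod.snd_sub] <;> nlinarith
  rcases le_total 0 v.1 with hx | hx
  · refine ⟨_, lightlike_step (-1) (by norm_num), ?_⟩
    simp only [minkowski]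
    nlinarith
  · refine ⟨_, lightlike_step 1 (by norm_num), ?_⟩
    simp only [minkowski]
    nlinarith

theorem exists_lightVec_minkowski_neg {v : F × F × F} (hv : minkowski v v < 0) :
    ∃ m, minkowski (lightVec m) v < 0 := by
  by_contra! h
  have quadratic_nonneg (m : F) :
      0 ≤ (v.2.2 + v.1) * (m * m) + -2 * v.2.1 * m + (v.2.2 - v.1) := by
    have := h m
    simp only [minkowski, lightVec] at this
    linarith
  have := discrim_le_zero quadratic_nonneg
  rw [discrim] at this
  rw [minkowski] at hv
  linarith

theorem exists_causalLE_smul {v n : F × F × F} (hn : 0 < n.2.2) (hn_light : minkowski n n = 0)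
    (hv : minkowski n v < 0) : ∃ r : F, 0 < r ∧ CausalLE v (r • n) := by
  obtain ⟨r, hr, hr_time, hr_form⟩ := (Filter.eventually_gt_atTop (0 : F)).and
    ((Filter.eventually_ge_atTop (v.2.2 / n.2.2)).and
      (Filter.eventually_ge_atTop (minkowski v v / (2 * minkowski n v)))) |>.exists
  rw [div_le_iff₀ hn] at hr_time
  rw [div_le_iff_of_neg (by linarith)] at hr_form
  refine ⟨r, hr, sub_nonneg.2 hr_time, ?_⟩
  rw [minkowski_sub_self]
  simp only [minkowski_smul_left, minkowski_smul_right, hn_light]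
  linarith

theorem coneLabel_smul_lightVec {r : F} (hr : 0 < r) (m : F) :
    coneLabel χ (r • lightVec m) = upperP2 (χ m) :=
  coneLabel_eq_upperP2.2 ⟨mul_pos hr (lightVec_time_pos m),
    by simp [minkowski_smul_left, minkowski_smul_right, minkowski_lightVec_self],
    by rw [slope_smul hr.ne', slope_lightVec]⟩

theorem exists_causalLE_coneLabel_eq_lowerP2 {v : F × F × F} (hv : coneLabel χ v = 0) (j : Fin 2) :
    ∃ w, CausalLE v w ∧ coneLabel χ w = lowerP2 j := by
  rw [coneLabel_eq_zero] at hv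
  fin_cases j
  · exact ⟨0, by simpa [CausalLE, futureCone, minkowski_neg_self] using ⟨hv.1.le, hv.2⟩,
      coneLabel_eq_lowerP2_zero.2 rfl⟩
  · obtain ⟨w, hvw, hw⟩ := exists_causalLE_spacelike hv.1
    exact ⟨w, hvw, coneLabel_eq_lowerP2_one.2 hw⟩

theorem exists_causalGE_coneLabel_eq_lowerP2 {v : F × F × F} (hv : coneLabel χ v = upperP2 i)
    (j : Fin 2) : ∃ w, CausalLE w v ∧ coneLabel χ w = lowerP2 j := by
  obtain ⟨hvt, hv, -⟩ := coneLabel_eq_upperP2.1 hv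
  fin_cases j
  · exact ⟨0, by simpa [CausalLE, futureCone] using ⟨hvt.le, hv.ge⟩,
      coneLabel_eq_lowerP2_zero.2 rfl⟩
  · refine ⟨(v.1, v.2.1, 0), ?_, coneLabel_eq_lowerP2_one.2 ?_⟩
    · simpa [CausalLE, futureCone, minkowski, mul_self_nonneg] using hvt.le
    · simp only [minkowski] at hv ⊢
      nlinarith

theorem exists_causalLE_coneLabel_eq_six {v : F × F × F} (hv : coneLabel χ v = upperP2 i) :
    ∃ w, CausalLE v w ∧ coneLabel χ w = 6 := by
  obtain ⟨hvt, hv, -⟩ := coneLabel_eq_upperP2.1 hv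
  refine ⟨v + (0, 0, 1), by simp [CausalLE, futureCone, minkowski], coneLabel_eq_six.2 ⟨?_, ?_⟩⟩
  · simp only [Prod.snd_add]
    positivity
  · rw [minkowski_add_self, hv]
    simp only [minkowski]
    linarith

section Dense

variable [TopologicalSpace F] [OrderTopology F]

theorem exists_smul_causalLE {v : F × F × F} (hvt : 0 < v.2.2) (hv : 0 < minkowski v v)
    (n : F × F × F) : ∃ r : F, 0 < r ∧ CausalLE (r • n) v := by
  have isOpen_causal : IsOpen {r : F | 0 < (v - r • n).2.2 ∧
      0 < minkowski (v - r • n) (v - r • n)} := by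
    simp only [minkowski, Prod.fst_sub, Prod.snd_sub, Prod.smul_fst, Prod.smul_snd, smul_eq_mul]
    exact (isOpen_lt continuous_const (by fun_prop)).inter
      (isOpen_lt continuous_const (by fun_prop))
  have causal_near_zero := isOpen_causal.mem_nhds (x := 0) (by simpa using ⟨hvt, hv⟩)
  obtain ⟨r, hr, hr_pos⟩ := Filter.nonempty_of_mem
    (Filter.inter_mem (mem_nhdsWithin_of_mem_nhds causal_near_zero)
      (self_mem_nhdsWithin (s := Set.Ioi (0 : F))))
  exact ⟨r, hr_pos, hr.1.le, hr.2.le⟩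

variable (hχ : ∀ i, Dense (χ ⁻¹' {i}))
include hχ

theorem exists_causalLE_coneLabel_eq_upperP2 {v : F × F × F} {j : Fin 2}
    (hv : coneLabel χ v = lowerP2 j) (i : Fin 3) :
    ∃ w, CausalLE v w ∧ coneLabel χ w = upperP2 i := by
  fin_cases j
  · obtain rfl := coneLabel_eq_lowerP2_zero.1 hv
    obtain ⟨m, rfl⟩ := (hχ i).nonempty
    exact ⟨lightVec m, by simpa [CausalLE, futureCone, minkowski_lightVec_self]
      using (lightVec_time_pos m).le, by simpa using coneLabel_smul_lightVec one_pos m⟩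
  · have continuous_form : Continuous fun m => minkowski (lightVec m) v := by
      unfold minkowski lightVec
      fun_prop
    obtain ⟨m, hm, rfl⟩ := (hχ i).inter_open_nonempty _
      (isOpen_lt continuous_form continuous_const)
      (exists_lightVec_minkowski_neg (coneLabel_eq_lowerP2_one.1 hv))
    obtain ⟨r, hr, hvr⟩ := exists_causalLE_smul (lightVec_time_pos m) (minkowski_lightVec_self m) hm
    exact ⟨r • lightVec m, hvr, coneLabel_smul_lightVec hr m⟩

theorem exists_causalGE_coneLabel_eq_upperP2 {v : F × F × F} (hv : coneLabel χ v = 6) (i : Fin 3) :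
    ∃ w, CausalLE w v ∧ coneLabel χ w = upperP2 i := by
  obtain ⟨m, rfl⟩ := (hχ i).nonempty
  obtain ⟨hvt, hv⟩ := coneLabel_eq_six.1 hv
  obtain ⟨r, hr, hrv⟩ := exists_smul_causalLE hvt hv (lightVec m)
  exact ⟨r • lightVec m, hrv, coneLabel_smul_lightVec hr m⟩

theorem isPMorphism_coneLabel : IsPMorphism CausalLE ltP2 (coneLabel χ) :=
  isPMorphism_ltP2_of_covers CausalLE.trans coneLabel_eq_or_lt
    (fun j _ hv => exists_causalLE_coneLabel_eq_lowerP2 hv j)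
    (fun _ i _ hv => exists_causalLE_coneLabel_eq_upperP2 hχ hv i)
    (fun _ _ hv => exists_causalLE_coneLabel_eq_six hv)
    (fun _ v _ => exists_causalGE_coneLabel_eq_zero v)
    (fun j _ _ hv => exists_causalGE_coneLabel_eq_lowerP2 hv j)
    (fun i _ hv => exists_causalGE_coneLabel_eq_upperP2 hχ hv i)

end Dense

end ConeLabel

theorem exists_isPMorphism_causalLE (F : Type*) [Field F] [LinearOrder F]
    [IsStrictOrderedRing F] : ∃ f, IsPMorphism (CausalLE (F := F)) ltP2 f := by
  let _ := Preorder.topology F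
  have : OrderTopology F := ⟨rfl⟩
  obtain ⟨χ, hχ⟩ := exists_coloring_dense_preimage F 3
  exact ⟨coneLabel χ, isPMorphism_coneLabel hχ⟩

theorem exists_common_upper_bound_ne {P : Type*} [SemilatticeSup P] [NoMaxOrder P] (x z : P) :
    ∃ y, (x ≤ y ∧ x ≠ y) ∧ z ≤ y ∧ z ≠ y := by
  obtain ⟨y, hy⟩ := exists_gt (x ⊔ z)
  have hxy := le_sup_left.trans_lt hy
  have hzy := le_sup_right.trans_lt hy
  exact ⟨y, ⟨hxy.le, hxy.ne⟩, hzy.le, hzy.ne⟩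

theorem delta_P2_distinguishes_three_from_two_dimensions_general (F : Type*) [Field F]
    [LinearOrder F] [IsStrictOrderedRing F] :
    TSatisfiable (CausalLE (F := F)) (delta 7 ltP2) ∧
    TSatisfiable (fun p q : F × F × F => CausalLE p q ∧ p ≠ q) (delta 7 ltP2) ∧
    ¬TSatisfiable (fun p q : F × F => p ≤ q) (delta 7 ltP2) ∧
    ¬TSatisfiable (fun p q : F × F => p ≤ q ∧ p ≠ q) (delta 7 ltP2) := by
  obtain ⟨f, hf⟩ := exists_isPMorphism_causalLE F
  refine ⟨hf.tSatisfiable_delta,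
    ((isPMorphism_and_ne_iff ltP2_irrefl).2 hf).tSatisfiable_delta, fun h => ?_, fun h => ?_⟩
  · obtain ⟨g, hg⟩ := exists_isPMorphism_of_tSatisfiable_delta ltP2_irrefl
      (fun x z => ⟨x ⊔ z, le_sup_left, le_sup_right⟩) h
    exact not_isPMorphism_ltP2_prod hg
  · obtain ⟨g, hg⟩ :=
      exists_isPMorphism_of_tSatisfiable_delta ltP2_irrefl exists_common_upper_bound_ne h
    exact not_isPMorphism_ltP2_prod ((isPMorphism_and_ne_iff ltP2_irrefl).1 hg)

/-- For `F = ℝ` and for `F = ℚ`, the formula `Δ(P₂)` is satisfiable over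
`(F³, ⊑)` and `(F³, ⊏)` (the 3-dimensional causal order and its irreflexive
part), but not over `(F², ≤)` nor `(F², <)` (the componentwise order and its
irreflexive part). -/
theorem delta_P2_distinguishes_three_from_two_dimensions :
    TSatisfiable caus3R (delta 7 ltP2) ∧
    TSatisfiable (fun p q : ℝ × ℝ × ℝ => caus3R p q ∧ p ≠ q) (delta 7 ltP2) ∧
    TSatisfiable caus3Q (delta 7 ltP2) ∧
    TSatisfiable (fun p q : ℚ × ℚ × ℚ => caus3Q p q ∧ p ≠ q) (delta 7 ltP2) ∧
    ¬ TSatisfiable (fun p q : ℝ × ℝ => p ≤ q) (delta 7 ltP2) ∧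
    ¬ TSatisfiable (fun p q : ℝ × ℝ => p ≤ q ∧ p ≠ q) (delta 7 ltP2) ∧
    ¬ TSatisfiable (fun p q : ℚ × ℚ => p ≤ q) (delta 7 ltP2) ∧
    ¬ TSatisfiable (fun p q : ℚ × ℚ => p ≤ q ∧ p ≠ q) (delta 7 ltP2) := by
  obtain ⟨real_le, real_lt, real_plane_le, real_plane_lt⟩ :=
    delta_P2_distinguishes_three_from_two_dimensions_general ℝ
  obtain ⟨rat_le, rat_lt, rat_plane_le, rat_plane_lt⟩ :=
    delta_P2_distinguishes_three_from_two_dimensions_general ℚ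
  rw [caus3R_eq_causalLE, caus3Q_eq_causalLE]
  exact ⟨real_le, real_lt, rat_le, rat_lt, real_plane_le, real_plane_lt, rat_plane_le, rat_plane_lt⟩

end Temporal
end
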